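/- Let ρ ∈ [0,1], let γ₁, γ₂ ≥ 0 be moduli of strong convexity of F and G respectively, let (x', y') be a saddle point, and let (x⁺, y⁺, x̄⁺, ȳ⁺) be an accelerated update of (x̂, ŷ) with parameters σ, τ > 0 and ϑ_p, ϑ_d > 0. Then for every (x, y) ∈ dom F × dom G, setting x_ρ = (1−ρ)x' + ρx and y_ρ = (1−ρ)y' + ρy, one has: ρ(L(x⁺, y) − L(x, y⁺)) + ‖x̄⁺ − x_ρ + σK*y_ρ‖²/(2σ) + (γ₁/(1+ρ))‖x⁺ − x_ρ‖² + ‖x̂ − x̄⁺‖²/(2σ) + (1 − ϑ_p)⟨ŷ − ȳ⁺, K(x⁺ + x̄⁺ − x̂ − x_ρ)⟩ + ‖ȳ⁺ − y_ρ − τKx_ρ‖²/(2τ) + (γ₂/(1+ρ))‖y⁺ − y_ρ‖² + ‖ŷ − ȳ⁺‖²/(2τ) − (1 − ϑ_d)⟨y⁺ + ȳ⁺ − ŷ − y_ρ, K(x̂ − x̄⁺)⟩ ≤ ‖x̂ − x_ρ + σK*y_ρ‖²/(2σ) + ‖ŷ − y_ρ − τKx_ρ‖²/(2τ). -/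

import Mathlib

/-!
The estimate is the sum of a primal and a dual inequality, plus a bilinear identity.

Strong convexity upgrades a subgradient inequality by `γ / 2 * ‖z - x‖ ^ 2` (`strong_subgradient`).
Apply this at `x⁺` in the directions `x` and `x'` with weights `ρ` and `1 - ρ`, and at `x'` in the
direction `x⁺` with weight `1 - ρ`; the values `F x'` cancel and the quadratic terms add up to
`γ₁ / 2 * (ρ * ‖x⁺ - x‖ ^ 2 + 2 * (1 - ρ) * ‖x⁺ - x'‖ ^ 2)`, which Cauchy-Schwarz bounds below by
`γ₁ / (1 + ρ) * ‖x⁺ - x_ρ‖ ^ 2` (`interpolated_estimate`). The same lemma serves `G`.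

In the sum of the two inequalities the saddle-point terms combine with the bilinear part of the
Lagrangian to `⟪K x⁺, y_ρ⟫ - ⟪K x_ρ, y⁺⟫`. What is left is an identity, seen by writing
`(x̂ - x⁺) / σ = (x̂ - x̄⁺) / σ - K* w` with `w = y⁺ + ϑ_p (ȳ⁺ - ŷ)` (similarly for `y`), and by
expanding the squared norms with a three-point identity.
-/

open scoped RealInnerProductSpace
open Filter

noncomputable section

variable {X Y : Type*} [NormedAddCommGroup X] [InnerProductSpace ℝ X] [CompleteSpace X]
  [NormedAddCommGroup Y] [InnerProductSpace ℝ Y] [CompleteSpace Y]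

/-- The convex subdifferential of an extended-real-valued functional. -/
def ediff (F : X → EReal) (x : X) : Set X :=
  {ξ : X | ∀ z : X, F x + ((⟪ξ, z - x⟫ : ℝ) : EReal) ≤ F z}

/-- The effective domain. -/
def edom (F : X → EReal) : Set X := {x : X | F x ≠ ⊤}

/-- Properness: nowhere `⊥` and somewhere finite. -/
def Proper (F : X → EReal) : Prop := (∀ x, F x ≠ ⊥) ∧ ∃ x, F x ≠ ⊤

/-- `F` admits `γ` as a modulus of strong convexity. -/
def StrongModulus (F : X → EReal) (γ : ℝ) : Prop :=
  ∀ x z : X, ∀ l : ℝ, 0 ≤ l → l ≤ 1 →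
    F (l • x + (1 - l) • z) + ((γ * l * (1 - l) * ‖x - z‖ ^ 2 / 2 : ℝ) : EReal) ≤
      (l : EReal) * F x + ((1 - l : ℝ) : EReal) * F z

/-- Saddle points of the Lagrangian `L(x,y) = ⟪Kx, y⟫ + F(x) - G(y)`. -/
def IsSaddle (K : X →L[ℝ] Y) (F : X → EReal) (G : Y → EReal) (xs : X) (ys : Y) : Prop :=
  xs ∈ edom F ∧ ys ∈ edom G ∧
    (-(ContinuousLinearMap.adjoint K) ys) ∈ ediff F xs ∧ K xs ∈ ediff G ys

/-- The Lagrangian, as a real number (meaningful on `edom F × edom G`). -/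
def lagr (K : X →L[ℝ] Y) (F : X → EReal) (G : Y → EReal) (x : X) (y : Y) : ℝ :=
  ⟪K x, y⟫ + (F x).toReal - (G y).toReal

/-- One accelerated update step with parameters `σ, τ, tp, td` from `(xh, yh)` to
`(xp, yp, xbp, ybp)`. -/
def IsAccUpdate (K : X →L[ℝ] Y) (F : X → EReal) (G : Y → EReal) (σ τ tp td : ℝ)
    (xh : X) (yh : Y) (xp : X) (yp : Y) (xbp : X) (ybp : Y) : Prop :=
  σ⁻¹ • (xh - xp) ∈ ediff F xp ∧
  τ⁻¹ • (yh - yp) ∈ ediff G yp ∧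
  xp - xbp = σ • (ContinuousLinearMap.adjoint K) (yp + tp • (ybp - yh)) ∧
  yp - ybp = -(τ • K (xp + td • (xbp - xh)))

/-- A functional that never takes the value `⊥` is finite where it has a subgradient, provided it
is finite somewhere. -/
lemma mem_edom_of_ediff {E : Type*} [NormedAddCommGroup E] [InnerProductSpace ℝ E]
    {F : E → EReal} (hp : Proper F) {x ξ : E} (hξ : ξ ∈ ediff F x) : x ∈ edom F := by
  obtain ⟨z, hz⟩ := hp.2
  intro hx
  have h := hξ z
  rw [hx, EReal.top_add_coe] at h
  exact hz (top_le_iff.mp h)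

/-- Subgradient inequality for strongly convex functionals: compare the subgradient inequality
at `l • z + (1 - l) • x` with strong convexity on the segment, divide by `l` and let `l → 0`. -/
lemma strong_subgradient {E : Type*} [NormedAddCommGroup E] [InnerProductSpace ℝ E]
    {F : E → EReal} {γ : ℝ} (hp : Proper F) (hs : StrongModulus F γ) {x ξ z : E}
    (hξ : ξ ∈ ediff F x) (hz : z ∈ edom F) :
    (F x).toReal + ⟪ξ, z - x⟫ + γ / 2 * ‖z - x‖ ^ 2 ≤ (F z).toReal := by
  have hx := mem_edom_of_ediff hp hξ
  have key : ∀ l : ℝ, 0 < l → l ≤ 1 →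
      (F x).toReal + ⟪ξ, z - x⟫ + γ / 2 * (1 - l) * ‖z - x‖ ^ 2 ≤ (F z).toReal := by
    intro l hl hl1
    have h1 := hs z x l hl.le hl1
    have h2 := hξ (l • z + (1 - l) • x)
    have e : l • z + (1 - l) • x - x = l • (z - x) := by module
    rw [e, inner_smul_right] at h2
    have h3 := (add_le_add_left h2
      ((γ * l * (1 - l) * ‖z - x‖ ^ 2 / 2 : ℝ) : EReal)).trans h1
    rw [← EReal.coe_toReal hx (hp.1 x), ← EReal.coe_toReal hz (hp.1 z)] at h3
    norm_cast at h3
    refine le_of_mul_le_mul_left ?_ hl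
    linarith
  have lim : Tendsto (fun l : ℝ => (F x).toReal + ⟪ξ, z - x⟫ + γ / 2 * (1 - l) * ‖z - x‖ ^ 2)
      (nhdsWithin 0 (Set.Ioi 0))
      (nhds ((F x).toReal + ⟪ξ, z - x⟫ + γ / 2 * (1 - 0) * ‖z - x‖ ^ 2)) :=
    (Continuous.tendsto (by fun_prop) _).mono_left nhdsWithin_le_nhds
  rw [sub_zero, mul_one] at lim
  refine le_of_tendsto lim ?_
  filter_upwards [Ioc_mem_nhdsGT (zero_lt_one' ℝ)] with l hl using key l hl.1 hl.2

/-- Cauchy-Schwarz with weights `ρ` and `(1 - ρ) / 2`, whose sum is `(1 + ρ) / 2`. -/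
lemma weighted_norm_sq {E : Type*} [NormedAddCommGroup E] [InnerProductSpace ℝ E]
    (a b : E) {ρ : ℝ} (h0 : 0 ≤ ρ) (h1 : ρ ≤ 1) :
    1 / (1 + ρ) * ‖(1 - ρ) • b + ρ • a‖ ^ 2 ≤
      (ρ * ‖a‖ ^ 2 + 2 * (1 - ρ) * ‖b‖ ^ 2) / 2 := by
  have e : ‖(1 - ρ) • b + ρ • a‖ ^ 2 =
      (1 - ρ) ^ 2 * ‖b‖ ^ 2 + 2 * (ρ * (1 - ρ)) * ⟪b, a⟫ + ρ ^ 2 * ‖a‖ ^ 2 := by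
    rw [norm_add_sq_real, norm_smul, norm_smul, mul_pow, mul_pow, inner_smul_left,
      inner_smul_right, Real.norm_eq_abs, Real.norm_eq_abs, sq_abs, sq_abs]
    simp only [conj_trivial]
    ring
  -- the defect of the inequality is `ρ (1 - ρ) / 2 * ‖a - 2 b‖ ^ 2`
  have h : 0 ≤ ρ * (1 - ρ) * ‖a - (2 : ℝ) • b‖ ^ 2 :=
    mul_nonneg (mul_nonneg h0 (by linarith)) (sq_nonneg _)
  rw [norm_sub_sq_real, inner_smul_right, norm_smul, real_inner_comm, Real.norm_eq_abs,
    mul_pow, sq_abs] at h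
  rw [e, one_div_mul_eq_div, div_le_iff₀ (by linarith)]
  linarith

/-- Function-value estimate at the interpolated point `(1 - ρ) • x' + ρ • x`, for a subgradient
`ξ` at the new iterate `p` and a subgradient `η` at the saddle-point component `x'`. -/
lemma interpolated_estimate {E : Type*} [NormedAddCommGroup E] [InnerProductSpace ℝ E]
    {F : E → EReal} {γ : ℝ} (hp : Proper F) (hγ : 0 ≤ γ) (hs : StrongModulus F γ)
    {ρ : ℝ} (h0 : 0 ≤ ρ) (h1 : ρ ≤ 1) {p x x' ξ η : E}
    (hξ : ξ ∈ ediff F p) (hη : η ∈ ediff F x') (hx : x ∈ edom F) :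
    ρ * ((F p).toReal - (F x).toReal)
        + γ / (1 + ρ) * ‖p - ((1 - ρ) • x' + ρ • x)‖ ^ 2 ≤
      ⟪ξ, p - ((1 - ρ) • x' + ρ • x)⟫ - (1 - ρ) * ⟪η, p - x'⟫ := by
  have a1 := mul_le_mul_of_nonneg_left (strong_subgradient hp hs hξ hx) h0
  have a2 := mul_le_mul_of_nonneg_left
    (strong_subgradient hp hs hξ (mem_edom_of_ediff hp hη)) (sub_nonneg.2 h1)
  have a3 := mul_le_mul_of_nonneg_left
    (strong_subgradient hp hs hη (mem_edom_of_ediff hp hξ)) (sub_nonneg.2 h1)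
  have e : p - ((1 - ρ) • x' + ρ • x) = (1 - ρ) • (p - x') + ρ • (p - x) := by module
  have a4 := mul_le_mul_of_nonneg_left (weighted_norm_sq (p - x) (p - x') h0 h1) hγ
  rw [norm_sub_rev x p, ← neg_sub p x, inner_neg_right] at a1
  rw [norm_sub_rev x' p, ← neg_sub p x', inner_neg_right] at a2
  rw [e, inner_add_right, inner_smul_right, inner_smul_right]
  rw [← mul_assoc, mul_one_div] at a4
  linarith

/-- Three-point identity, with `a - b` the increment and `b + c` the shifted base point. -/
lemma three_point {E : Type*} [NormedAddCommGroup E] [InnerProductSpace ℝ E] (a b c : E)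
    {s : ℝ} :
    ‖a + c‖ ^ 2 / (2 * s) = ‖b + c‖ ^ 2 / (2 * s) + ‖a - b‖ ^ 2 / (2 * s)
      + s⁻¹ * ⟪a - b, b + c⟫ := by
  have e : a + c = (a - b) + (b + c) := by abel
  rw [e, norm_add_sq_real (a - b) (b + c)]
  ring

/-- Lemma: fundamental Lagrangian estimate for the accelerated update. -/
theorem statement10
    (F : X → EReal) (G : Y → EReal) (K : X →L[ℝ] Y)
    (hFp : Proper F) (hFl : LowerSemicontinuous F)
    (hGp : Proper G) (hGl : LowerSemicontinuous G)
    (γ₁ γ₂ : ℝ) (hγ₁ : 0 ≤ γ₁) (hγ₂ : 0 ≤ γ₂)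
    (hF : StrongModulus F γ₁) (hG : StrongModulus G γ₂)
    (ρ : ℝ) (hρ0 : 0 ≤ ρ) (hρ1 : ρ ≤ 1)
    (x' : X) (y' : Y) (hsaddle : IsSaddle K F G x' y')
    (σ τ tp td : ℝ) (hσ : 0 < σ) (hτ : 0 < τ) (htp : 0 < tp) (htd : 0 < td)
    (xh : X) (yh : Y) (xp : X) (yp : Y) (xbp : X) (ybp : Y)
    (hupd : IsAccUpdate K F G σ τ tp td xh yh xp yp xbp ybp) :
    ∀ x ∈ edom F, ∀ y ∈ edom G,
      ρ * (lagr K F G xp y - lagr K F G x yp)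
        + ‖xbp - ((1 - ρ) • x' + ρ • x)
            + σ • (ContinuousLinearMap.adjoint K) ((1 - ρ) • y' + ρ • y)‖ ^ 2 / (2 * σ)
        + (γ₁ / (1 + ρ)) * ‖xp - ((1 - ρ) • x' + ρ • x)‖ ^ 2
        + ‖xh - xbp‖ ^ 2 / (2 * σ)
        + (1 - tp) * ⟪yh - ybp, K (xp + xbp - xh - ((1 - ρ) • x' + ρ • x))⟫
        + ‖ybp - ((1 - ρ) • y' + ρ • y) - τ • K ((1 - ρ) • x' + ρ • x)‖ ^ 2 / (2 * τ)
        + (γ₂ / (1 + ρ)) * ‖yp - ((1 - ρ) • y' + ρ • y)‖ ^ 2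
        + ‖yh - ybp‖ ^ 2 / (2 * τ)
        - (1 - td) * ⟪yp + ybp - yh - ((1 - ρ) • y' + ρ • y), K (xh - xbp)⟫
      ≤ ‖xh - ((1 - ρ) • x' + ρ • x)
            + σ • (ContinuousLinearMap.adjoint K) ((1 - ρ) • y' + ρ • y)‖ ^ 2 / (2 * σ)
        + ‖yh - ((1 - ρ) • y' + ρ • y) - τ • K ((1 - ρ) • x' + ρ • x)‖ ^ 2 / (2 * τ) := by
  intro x hx y hy
  obtain ⟨u1, u2, u3, u4⟩ := hupd
  obtain ⟨-, -, s1, s2⟩ := hsaddle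
  have hP := interpolated_estimate hFp hγ₁ hF hρ0 hρ1 u1 s1 hx
  have hD := interpolated_estimate hGp hγ₂ hG hρ0 hρ1 u2 s2 hy
  have hsat : ∀ (p : X) (q : Y),
      ⟪K p, (1 - ρ) • y' + ρ • y⟫ = (1 - ρ) * ⟪K p, y'⟫ + ρ * ⟪K p, y⟫ ∧
      ⟪K ((1 - ρ) • x' + ρ • x), q⟫ = (1 - ρ) * ⟪K x', q⟫ + ρ * ⟪K x, q⟫ := by
    intro p q
    constructor
    · rw [inner_add_right, inner_smul_right, inner_smul_right]
    · rw [map_add, map_smul, map_smul, inner_add_left, inner_smul_left, inner_smul_left]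
      simp only [conj_trivial]
  have b1 := (hsat xp 0).1
  have b2 := (hsat 0 yp).2
  generalize (1 - ρ) • x' + ρ • x = r at *
  generalize (1 - ρ) • y' + ρ • y = t at *
  clear hsat
  have v1 : σ⁻¹ • (xh - xp) = σ⁻¹ • (xh - xbp)
      - (ContinuousLinearMap.adjoint K) (yp + tp • (ybp - yh)) := by
    rw [eq_add_of_sub_eq u3, ← sub_sub, sub_right_comm, smul_sub, smul_sub,
      smul_smul, inv_mul_cancel₀ hσ.ne', one_smul, smul_sub]
  have v2 : τ⁻¹ • (yh - yp) = τ⁻¹ • (yh - ybp) + K (xp + td • (xbp - xh)) := by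
    rw [eq_add_of_sub_eq u4, ← sub_sub, sub_right_comm, sub_neg_eq_add, smul_add, smul_sub,
      smul_smul, inv_mul_cancel₀ hτ.ne', one_smul]
  rw [v1] at hP
  rw [v2] at hD
  -- the increment is paired with `x⁺` above and with `x̄⁺` in the three-point identity; their
  -- difference is `σ K* w`
  have w1 : ⟪xh - xbp, xp⟫ = ⟪xh - xbp, xbp⟫
      + σ * ⟪K (xh - xbp), yp + tp • (ybp - yh)⟫ := by
    rw [eq_add_of_sub_eq u3, inner_add_right, inner_smul_right,
      ContinuousLinearMap.adjoint_inner_right]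
    ring
  have w2 : ⟪yh - ybp, yp⟫ = ⟪yh - ybp, ybp⟫
      - τ * ⟪yh - ybp, K (xp + td • (xbp - xh))⟫ := by
    rw [eq_add_of_sub_eq u4, inner_add_right, inner_neg_right, inner_smul_right]
    ring
  have t1 := three_point (xh - r) (xbp - r) (σ • (ContinuousLinearMap.adjoint K) t) (s := σ)
  have t2 := three_point (yh - t) (ybp - t) (-(τ • K r)) (s := τ)
  rw [← sub_eq_add_neg, ← sub_eq_add_neg, sub_sub_sub_cancel_right] at t2
  rw [sub_sub_sub_cancel_right] at t1
  have t1' : σ⁻¹ * ⟪xh - xbp, xbp - r + σ • (ContinuousLinearMap.adjoint K) t⟫ =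
      σ⁻¹ * ⟪xh - xbp, xp - r⟫ - ⟪K (xh - xbp), yp + tp • (ybp - yh)⟫ + ⟪K (xh - xbp), t⟫ := by
    rw [inner_add_right, inner_sub_right, inner_sub_right, w1, inner_smul_right,
      ContinuousLinearMap.adjoint_inner_right]
    field_simp
    ring
  have t2' : τ⁻¹ * ⟪yh - ybp, ybp - t - τ • K r⟫ =
      τ⁻¹ * ⟪yh - ybp, yp - t⟫ + ⟪yh - ybp, K (xp + td • (xbp - xh))⟫ - ⟪yh - ybp, K r⟫ := by
    rw [inner_sub_right, inner_sub_right, inner_sub_right, w2, inner_smul_right]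
    field_simp
    ring
  rw [inner_sub_left, inner_smul_left, ContinuousLinearMap.adjoint_inner_left,
    inner_neg_left, ContinuousLinearMap.adjoint_inner_left] at hP
  rw [inner_add_left, inner_smul_left] at hD
  simp only [conj_trivial] at hP hD
  rw [t1, t2, t1', t2']
  clear t1 t2 t1' t2' w1 w2 v1 v2 u1 u2 u3 u4 s1 s2
  unfold lagr
  -- every remaining pairing couples `X` with `Y` through `K`; once these are expanded with the
  -- `K`-argument on the left, only linear arithmetic is left
  have c : ∀ (p : X) (q : Y), ⟪q, K p⟫ = ⟪K p, q⟫ := fun p q => real_inner_comm _ _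
  simp only [c] at hP hD ⊢
  have m1 : ∀ p q : X, ∀ z : Y, ⟪K (p + q), z⟫ = ⟪K p, z⟫ + ⟪K q, z⟫ := fun p q z => by
    rw [map_add, inner_add_left]
  have m2 : ∀ p q : X, ∀ z : Y, ⟪K (p - q), z⟫ = ⟪K p, z⟫ - ⟪K q, z⟫ := fun p q z => by
    rw [map_sub, inner_sub_left]
  have m3 : ∀ (l : ℝ) (p : X) (z : Y), ⟪K (l • p), z⟫ = l * ⟪K p, z⟫ := fun l p z => by
    rw [map_smul, real_inner_smul_left]
  have m4 : ∀ (p : X) (z w : Y), ⟪K p, z + w⟫ = ⟪K p, z⟫ + ⟪K p, w⟫ := fun p z w =>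
    inner_add_right _ _ _
  have m5 : ∀ (p : X) (z w : Y), ⟪K p, z - w⟫ = ⟪K p, z⟫ - ⟪K p, w⟫ := fun p z w =>
    inner_sub_right _ _ _
  have m6 : ∀ (l : ℝ) (p : X) (z : Y), ⟪K p, l • z⟫ = l * ⟪K p, z⟫ := fun l p z =>
    real_inner_smul_right _ _ _
  simp only [m1, m2, m3, m4, m5, m6] at hP hD ⊢
  linarith


end
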